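/- Fix η ≥ 0, and let j(n) be an increasing integer-valued function of n with j(n) ≥ (e·e^{1/e} + η)·√n for all n. Let τ_n ∈ S_{j(n)} be any sequence of patterns. For each n, let Σ_n be a uniformly random permutation of [n], let 𝕏_n = (X_α)_{α ∈ Γ_{j(n)}} be the family of indicators that τ_n occurs at the j(n)-element position set α, where Γ_{j(n)} is the set of all j(n)-element subsets of [n], and let 𝔹_n = (B_α) be independent Bernoulli random variables with E B_α = E X_α for all α. Then d_TV( L(𝕏_n), L(𝔹_n) ) → 0 as n → ∞; equivalently, for every function h : {0,1}^{Γ_{j(n)}} → ℝ and every Borel set A ⊆ ℝ, P(h(𝕏_n) ∈ A) = P(h(𝔹_n) ∈ A) + o(1). -/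

import Mathlib

open scoped Classical
open Filter

noncomputable section

/-- `τ` occurs in `σ` at the strictly increasing positions given by `f`:
`f` is strictly increasing and `σ ∘ f` is order-isomorphic to `τ`. -/
def OccursAt {m n : ℕ} (τ : Equiv.Perm (Fin m)) (σ : Equiv.Perm (Fin n))
    (f : Fin m → Fin n) : Prop :=
  StrictMono f ∧ ∀ k l, σ (f k) < σ (f l) ↔ τ k < τ l

/-- `τ` occurs in `σ` at the set of positions `α` (listed in increasing order). -/
def OccursOn {m n : ℕ} (τ : Equiv.Perm (Fin m)) (σ : Equiv.Perm (Fin n))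
    (α : Finset (Fin n)) : Prop :=
  ∃ f : Fin m → Fin n, StrictMono f ∧ Finset.univ.image f = α ∧
    ∀ k l, σ (f k) < σ (f l) ↔ τ k < τ l

/-- `τ` occurs in `σ` at the consecutive (0-indexed) positions `i, i+1, …, i+m-1`. -/
def OccursConsec {m n : ℕ} (τ : Equiv.Perm (Fin m)) (σ : Equiv.Perm (Fin n)) (i : ℕ) : Prop :=
  ∃ h : i + m ≤ n, ∀ k l : Fin m,
    σ ⟨i + k, by have := k.isLt; omega⟩ < σ ⟨i + l, by have := l.isLt; omega⟩ ↔ τ k < τ l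

/-- The overlap count `L_s(τ)`: the number of permutations of `[2m-s]` containing
two occurrences of `τ` at index sets sharing exactly `s` elements. -/
def overlapCount {m : ℕ} (τ : Equiv.Perm (Fin m)) (s : ℕ) : ℕ :=
  Set.ncard {ρ : Equiv.Perm (Fin (2 * m - s)) |
    ∃ α β : Finset (Fin (2 * m - s)), α.card = m ∧ β.card = m ∧ (α ∩ β).card = s ∧
      OccursOn τ ρ α ∧ OccursOn τ ρ β}

/-- The sequential overlap count `L̄_s(τ)`: the number of permutations of `[2m-s]` with
occurrences of `τ` at positions `(1,…,m)` and `(m-s+1,…,2m-s)`. -/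
def seqOverlapCount {m : ℕ} (τ : Equiv.Perm (Fin m)) (s : ℕ) : ℕ :=
  Set.ncard {ρ : Equiv.Perm (Fin (2 * m - s)) |
    OccursConsec τ ρ 0 ∧ OccursConsec τ ρ (m - s)}

/-- The number of inversions of a permutation. -/
def invCount {n : ℕ} (σ : Equiv.Perm (Fin n)) : ℕ :=
  (Finset.univ.filter fun p : Fin n × Fin n => p.1 < p.2 ∧ σ p.2 < σ p.1).card

/-- The inversion polynomial `I_n(q) = ∏_{j=1}^n (1 + q + ⋯ + q^{j-1})`. -/
def invPoly (n : ℕ) (q : ℝ) : ℝ :=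
  ∏ j ∈ Finset.range n, ∑ i ∈ Finset.range (j + 1), q ^ i

/-- Probability of the event `E` under the uniform distribution on `S_n`. -/
def unifProb {n : ℕ} (E : Set (Equiv.Perm (Fin n))) : ℝ :=
  (E.ncard : ℝ) / (n.factorial : ℝ)

/-- Probability of the event `E` under the Mallows(q) distribution on `S_n`. -/
def mallowsProb {n : ℕ} (q : ℝ) (E : Set (Equiv.Perm (Fin n))) : ℝ :=
  (∑ σ ∈ Finset.univ.filter (· ∈ E), q ^ invCount σ) / invPoly n q

/-- Expectation of `X` under the uniform distribution on `S_n`. -/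
def unifExp {n : ℕ} (X : Equiv.Perm (Fin n) → ℝ) : ℝ :=
  (∑ σ : Equiv.Perm (Fin n), X σ) / (n.factorial : ℝ)

/-- Expectation of `X` under the Mallows(q) distribution on `S_n`. -/
def mallowsExp {n : ℕ} (q : ℝ) (X : Equiv.Perm (Fin n) → ℝ) : ℝ :=
  (∑ σ : Equiv.Perm (Fin n), X σ * q ^ invCount σ) / invPoly n q

/-- The Poisson(lam) probability mass function. -/
def poissonPMF (lam : ℝ) (k : ℕ) : ℝ :=
  Real.exp (-lam) * lam ^ k / (k.factorial : ℝ)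

/-- Total variation distance between the law of the ℕ-valued statistic `W` of a uniformly
random permutation of `[n]` and the Poisson(lam) distribution. -/
def dTVNatUnif {n : ℕ} (W : Equiv.Perm (Fin n) → ℕ) (lam : ℝ) : ℝ :=
  (1 / 2) * ∑' k : ℕ, |unifProb {σ | W σ = k} - poissonPMF lam k|

/-- Total variation distance between the law of the ℕ-valued statistic `W` of a Mallows(q)
random permutation of `[n]` and the Poisson(lam) distribution. -/
def dTVNatMallows {n : ℕ} (q : ℝ) (W : Equiv.Perm (Fin n) → ℕ) (lam : ℝ) : ℝ :=
  (1 / 2) * ∑' k : ℕ, |mallowsProb q {σ | W σ = k} - poissonPMF lam k|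

/-- Total variation distance between the joint law of the indicator family
`(X_α)_{α ∈ I}` of a uniformly random permutation of `[n]` and the joint law of
independent Bernoulli random variables with marginals `p`. -/
def dTVFamUnif {n : ℕ} {I : Type*} [Fintype I] [DecidableEq I]
    (X : Equiv.Perm (Fin n) → I → Prop) (p : I → ℝ) : ℝ :=
  (1 / 2) * ∑ x : I → Bool,
    |unifProb {σ | ∀ α, X σ α ↔ x α = true} - ∏ α, (if x α then p α else 1 - p α)|

/-- Total variation distance between the joint law of the indicator family
`(X_α)_{α ∈ I}` of a Mallows(q) random permutation of `[n]` and the joint law of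
independent Bernoulli random variables with marginals `p`. -/
def dTVFamMallows {n : ℕ} (q : ℝ) {I : Type*} [Fintype I] [DecidableEq I]
    (X : Equiv.Perm (Fin n) → I → Prop) (p : I → ℝ) : ℝ :=
  (1 / 2) * ∑ x : I → Bool,
    |mallowsProb q {σ | ∀ α, X σ α ↔ x α = true} - ∏ α, (if x α then p α else 1 - p α)|

/-!
Any two laws on `{0,1}^I` that both charge the zero family with mass at least `1 - δ` are within
total variation distance `δ`. By the union bound for the pattern indicators and the inequality
`1 - ∑ p_α ≤ ∏ (1 - p_α)` for the Bernoulli family, `δ` can be taken to be the expected number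
`∑ p_α` of occurrences. All `m!` patterns are equally likely at a given set of `m` positions, so
this expectation is `n.choose m / m!`, at most `n ^ m / m! ^ 2`. By Stirling's bound it is at most
`1 / (2πm)` as soon as `m ≥ e√n`.
-/

theorem half_sum_abs_sub_le_of_one_sub_le {ι : Type*} [Fintype ι] {P Q : ι → ℝ} {δ : ℝ}
    (hP : ∀ x, 0 ≤ P x) (hQ : ∀ x, 0 ≤ Q x) (hP_sum : ∑ x, P x = 1) (hQ_sum : ∑ x, Q x = 1)
    (z : ι) (hPz : 1 - δ ≤ P z) (hQz : 1 - δ ≤ Q z) :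
    1 / 2 * ∑ x, |P x - Q x| ≤ δ := by
  have habs : ∀ x, |P x - Q x| = P x + Q x - 2 * min (P x) (Q x) := fun x => by
    rw [← max_sub_min_eq_abs', ← max_add_min (P x) (Q x)]
    ring
  have hsum : ∑ x, |P x - Q x| = 2 - 2 * ∑ x, min (P x) (Q x) := by
    simp only [habs, Finset.sum_sub_distrib, Finset.sum_add_distrib, ← Finset.mul_sum, hP_sum,
      hQ_sum]
    norm_num
  have hmin : 1 - δ ≤ ∑ x, min (P x) (Q x) :=
    (le_min hPz hQz).trans <| Finset.single_le_sum (f := fun x => min (P x) (Q x))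
      (fun x _ => le_min (hP x) (hQ x)) (Finset.mem_univ z)
  linarith

theorem one_sub_sum_le_prod_one_sub {I R : Type*} [CommRing R] [LinearOrder R]
    [IsStrictOrderedRing R] {p : I → R} (s : Finset I) (hp₀ : ∀ i ∈ s, 0 ≤ p i)
    (hp₁ : ∀ i ∈ s, p i ≤ 1) : 1 - ∑ i ∈ s, p i ≤ ∏ i ∈ s, (1 - p i) := by
  induction s using Finset.induction_on with
  | empty => simp
  | insert a s ha ih =>
    rw [Finset.forall_mem_insert] at hp₀ hp₁
    rw [Finset.sum_insert ha, Finset.prod_insert ha]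
    have hprod_le : ∏ i ∈ s, (1 - p i) ≤ 1 :=
      Finset.prod_le_one (fun i hi => sub_nonneg.2 (hp₁.2 i hi))
        (fun i hi => sub_le_self 1 (hp₀.2 i hi))
    nlinarith [hp₀.1, ih hp₀.2 hp₁.2]

section BernoulliLaw

variable {I : Type*} [Fintype I] {p : I → ℝ}

/-- The law on `{0,1}^I` of independent Bernoulli variables with means `p`, as a mass function;
it is the second term in the summand of `dTVFamUnif`. -/
def bernoulliLaw (p : I → ℝ) (x : I → Bool) : ℝ :=
  ∏ α, (if x α then p α else 1 - p α)

theorem bernoulliLaw_nonneg (hp₀ : ∀ i, 0 ≤ p i) (hp₁ : ∀ i, p i ≤ 1) (x : I → Bool) :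
    0 ≤ bernoulliLaw p x :=
  Finset.prod_nonneg fun i _ => by
    split_ifs
    exacts [hp₀ i, sub_nonneg.2 (hp₁ i)]

theorem sum_bernoulliLaw [DecidableEq I] (p : I → ℝ) : ∑ x, bernoulliLaw p x = 1 := by
  have h := Finset.prod_univ_sum (fun _ : I => (Finset.univ : Finset Bool))
    fun i b => if b then p i else 1 - p i
  rw [Fintype.piFinset_univ] at h
  simpa [bernoulliLaw] using h.symm

theorem one_sub_sum_le_bernoulliLaw_false (hp₀ : ∀ i, 0 ≤ p i) (hp₁ : ∀ i, p i ≤ 1) :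
    1 - ∑ i, p i ≤ bernoulliLaw p (fun _ => false) := by
  simpa [bernoulliLaw] using
    one_sub_sum_le_prod_one_sub Finset.univ (fun i _ => hp₀ i) (fun i _ => hp₁ i)

end BernoulliLaw

section UniformPermutation

variable {n : ℕ}

theorem unifProb_nonneg (E : Set (Equiv.Perm (Fin n))) : 0 ≤ unifProb E := by
  unfold unifProb
  positivity

theorem ncard_univ_perm_fin (n : ℕ) :
    (Set.univ : Set (Equiv.Perm (Fin n))).ncard = n.factorial := by
  rw [Set.ncard_univ, Nat.card_perm, Nat.card_fin]

theorem unifProb_univ : unifProb (Set.univ : Set (Equiv.Perm (Fin n))) = 1 := by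
  rw [unifProb, ncard_univ_perm_fin, div_self (by positivity)]

theorem unifProb_mono {E F : Set (Equiv.Perm (Fin n))} (h : E ⊆ F) : unifProb E ≤ unifProb F := by
  unfold unifProb
  gcongr
  exact F.toFinite

theorem unifProb_le_one (E : Set (Equiv.Perm (Fin n))) : unifProb E ≤ 1 :=
  (unifProb_mono E.subset_univ).trans_eq unifProb_univ

theorem unifProb_union_le (E F : Set (Equiv.Perm (Fin n))) :
    unifProb (E ∪ F) ≤ unifProb E + unifProb F := by
  unfold unifProb
  rw [← add_div]
  gcongr
  exact_mod_cast Set.ncard_union_le E F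

theorem unifProb_iUnion_le {I : Type*} [Fintype I] (E : I → Set (Equiv.Perm (Fin n))) :
    unifProb (⋃ α, E α) ≤ ∑ α, unifProb (E α) := by
  simp only [unifProb]
  rw [← Finset.sum_div]
  gcongr
  simpa using Nat.cast_le (α := ℝ).2 (Finset.univ.set_ncard_biUnion_le E)

theorem sum_unifProb_fiber {κ : Type*} [Fintype κ] (Y : Equiv.Perm (Fin n) → κ) :
    ∑ x, unifProb {σ | Y σ = x} = 1 := by
  have hcard : ∑ x, {σ | Y σ = x}.ncard = n.factorial := by
    rw [← ncard_univ_perm_fin, Set.ncard_univ, Nat.card_eq_fintype_card, ← Finset.card_univ,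
      Finset.card_eq_sum_card_fiberwise (f := Y) (t := Finset.univ) (by simp [Set.mapsTo_univ])]
    simp [Set.ncard_eq_toFinset_card']
  simp only [unifProb]
  rw [← Finset.sum_div, ← Nat.cast_sum, hcard, div_self (by positivity)]

variable {I : Type*} (X : Equiv.Perm (Fin n) → I → Prop)

/-- The law on `{0,1}^I` of the indicators of the events `X · α` under a uniformly random
permutation, as a mass function; it is the first term in the summand of `dTVFamUnif`. -/
def indicatorLaw (x : I → Bool) : ℝ :=
  unifProb {σ | ∀ α, X σ α ↔ x α = true}

theorem indicatorLaw_nonneg (x : I → Bool) : 0 ≤ indicatorLaw X x :=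
  unifProb_nonneg _

variable [Fintype I]

theorem sum_indicatorLaw [DecidableEq I] : ∑ x, indicatorLaw X x = 1 := by
  rw [← sum_unifProb_fiber fun σ α => decide (X σ α)]
  refine Finset.sum_congr rfl fun x _ => congrArg unifProb <| Set.ext fun σ => ?_
  exact (forall_congr' fun α => by rw [Bool.eq_iff_iff (b := x α), decide_eq_true_iff]).trans
    funext_iff.symm

theorem one_sub_sum_le_indicatorLaw_false :
    1 - ∑ α, unifProb {σ | X σ α} ≤ indicatorLaw X (fun _ => false) := by
  have hcover : {σ | ∀ α, X σ α ↔ false = true} ∪ ⋃ α, {σ | X σ α} = Set.univ := by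
    ext σ
    simp [← not_exists, em']
  have hone : (1 : ℝ) ≤ indicatorLaw X (fun _ => false) + ∑ α, unifProb {σ | X σ α} :=
    calc (1 : ℝ) = unifProb ({σ | ∀ α, X σ α ↔ false = true} ∪ ⋃ α, {σ | X σ α}) := by
          rw [hcover, unifProb_univ]
      _ ≤ _ := (unifProb_union_le _ _).trans (add_le_add_right (unifProb_iUnion_le _) _)
  linarith

theorem dTVFamUnif_nonneg [DecidableEq I] (p : I → ℝ) : 0 ≤ dTVFamUnif X p := by
  unfold dTVFamUnif
  positivity

theorem dTVFamUnif_le_sum_unifProb [DecidableEq I] :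
    dTVFamUnif X (fun α => unifProb {σ | X σ α}) ≤ ∑ α, unifProb {σ | X σ α} := by
  have hp₀ : ∀ α, 0 ≤ unifProb {σ | X σ α} := fun α => unifProb_nonneg _
  have hp₁ : ∀ α, unifProb {σ | X σ α} ≤ 1 := fun α => unifProb_le_one _
  exact half_sum_abs_sub_le_of_one_sub_le (indicatorLaw_nonneg X) (bernoulliLaw_nonneg hp₀ hp₁)
    (sum_indicatorLaw X) (sum_bernoulliLaw _) (fun _ => false)
    (one_sub_sum_le_indicatorLaw_false X) (one_sub_sum_le_bernoulliLaw_false hp₀ hp₁)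

end UniformPermutation

section Patterns

theorem card_fiber_mul_card {G H : Type*} [Group G] [Group H] (φ : G → H) (ι : H →* G)
    (hφ : ∀ g h, φ (g * ι h) = φ g * h) (h₀ : H) :
    Nat.card {g // φ g = h₀} * Nat.card H = Nat.card G := by
  rw [← Nat.card_prod]
  exact Nat.card_congr
    { toFun := fun p => p.1 * ι p.2
      invFun := fun g =>
        (⟨g * ι ((φ g)⁻¹ * h₀), by rw [hφ, mul_inv_cancel_left]⟩, h₀⁻¹ * φ g)
      left_inv := by
        rintro ⟨⟨g, rfl⟩, h⟩
        simp [hφ, mul_assoc]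
      right_inv := fun g => by simp [mul_assoc] }

variable {m n : ℕ}

/-- The pattern of `σ` at the positions listed by `f`, that is, the standardization of the word
`σ (f 0), σ (f 1), …`. -/
def patternAt (σ : Equiv.Perm (Fin n)) (f : Fin m → Fin n) : Equiv.Perm (Fin m) :=
  (Tuple.sort (σ ∘ f))⁻¹

theorem occursAt_iff_patternAt_eq {τ : Equiv.Perm (Fin m)} {σ : Equiv.Perm (Fin n)}
    {f : Fin m → Fin n} (hf : StrictMono f) : OccursAt τ σ f ↔ patternAt σ f = τ := by
  have hinj : Function.Injective (σ ∘ f) := σ.injective.comp hf.injective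
  rw [patternAt, inv_eq_iff_eq_inv, eq_comm, Tuple.eq_sort_iff]
  constructor
  · rintro ⟨-, hτ⟩
    refine ⟨StrictMono.monotone fun k l hkl => (hτ _ _).2 (by simpa using hkl),
      fun k l hkl heq => ?_⟩
    exact absurd (τ⁻¹.injective (hinj heq)) hkl.ne
  · rintro ⟨hmono, -⟩
    have hstrict : StrictMono ((σ ∘ f) ∘ ⇑τ⁻¹) :=
      hmono.strictMono_of_injective (hinj.comp τ⁻¹.injective)
    exact ⟨hf, fun k l => by simpa using hstrict.lt_iff_lt (a := τ k) (b := τ l)⟩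

theorem OccursAt.mul_viaEmbeddingHom {τ : Equiv.Perm (Fin m)} {σ : Equiv.Perm (Fin n)}
    {f : Fin m ↪o Fin n} (h : OccursAt τ σ f) (π : Equiv.Perm (Fin m)) :
    OccursAt (τ * π) (σ * Equiv.Perm.viaEmbeddingHom f.toEmbedding π) f := by
  have hπ : ∀ k, Equiv.Perm.viaEmbeddingHom f.toEmbedding π (f k) = f (π k) :=
    Equiv.Perm.viaEmbedding_apply π f.toEmbedding
  refine ⟨f.strictMono, fun k l => ?_⟩
  simpa only [Equiv.Perm.mul_apply, hπ] using h.2 (π k) (π l)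

theorem patternAt_mul_viaEmbeddingHom (f : Fin m ↪o Fin n) (σ : Equiv.Perm (Fin n))
    (π : Equiv.Perm (Fin m)) :
    patternAt (σ * Equiv.Perm.viaEmbeddingHom f.toEmbedding π) f = patternAt σ f * π :=
  (occursAt_iff_patternAt_eq f.strictMono).1 <|
    ((occursAt_iff_patternAt_eq f.strictMono).2 rfl).mul_viaEmbeddingHom π

theorem occursOn_iff_occursAt {τ : Equiv.Perm (Fin m)} {σ : Equiv.Perm (Fin n)}
    {α : Finset (Fin n)} (hα : α.card = m) :
    OccursOn τ σ α ↔ OccursAt τ σ (α.orderEmbOfFin hα) := by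
  constructor
  · rintro ⟨f, hf, rfl, hτ⟩
    rw [← Finset.orderEmbOfFin_unique hα (fun k => Finset.mem_image_of_mem f (by simp)) hf]
    exact ⟨hf, hτ⟩
  · rintro ⟨hf, hτ⟩
    exact ⟨_, hf, Finset.image_orderEmbOfFin_univ α hα, hτ⟩

theorem unifProb_occursAt (τ : Equiv.Perm (Fin m)) (f : Fin m ↪o Fin n) :
    unifProb {σ | OccursAt τ σ f} = 1 / m.factorial := by
  have hcard := card_fiber_mul_card (fun σ => patternAt σ f)
    (Equiv.Perm.viaEmbeddingHom f.toEmbedding) (patternAt_mul_viaEmbeddingHom f) τ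
  rw [Nat.card_perm, Nat.card_perm, Nat.card_fin, Nat.card_fin] at hcard
  simp only [occursAt_iff_patternAt_eq f.strictMono]
  rw [unifProb, div_eq_div_iff (by positivity) (by positivity), one_mul]
  exact_mod_cast hcard

theorem unifProb_occursOn (τ : Equiv.Perm (Fin m)) {α : Finset (Fin n)} (hα : α.card = m) :
    unifProb {σ | OccursOn τ σ α} = 1 / m.factorial := by
  simp only [occursOn_iff_occursAt hα, unifProb_occursAt]

theorem sum_unifProb_occursOn (τ : Equiv.Perm (Fin m)) :
    ∑ α : {α : Finset (Fin n) // α.card = m}, unifProb {σ | OccursOn τ σ α.1} =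
      n.choose m / m.factorial := by
  rw [Finset.sum_congr rfl fun α _ => unifProb_occursOn τ α.2, Finset.sum_const, Finset.card_univ,
    Fintype.card_finset_len, Fintype.card_fin, nsmul_eq_mul, mul_one_div]

end Patterns

section Asymptotics

theorem two_pi_mul_mul_pow_le_factorial_sq {x : ℝ} (hx : 0 ≤ x) {m : ℕ}
    (hm : Real.exp 1 * Real.sqrt x ≤ m) :
    2 * Real.pi * m * x ^ m ≤ (m.factorial : ℝ) ^ 2 := by
  have hx_le : x ≤ (m / Real.exp 1) ^ 2 :=
    (Real.sqrt_le_left (by positivity)).1 ((le_div_iff₀' (Real.exp_pos 1)).2 hm)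
  calc 2 * Real.pi * m * x ^ m
      ≤ 2 * Real.pi * m * ((m / Real.exp 1) ^ 2) ^ m := by gcongr
    _ = (Real.sqrt (2 * Real.pi * m) * (m / Real.exp 1) ^ m) ^ 2 := by
        rw [mul_pow, Real.sq_sqrt (by positivity), ← pow_mul, ← pow_mul, mul_comm 2 m]
    _ ≤ (m.factorial : ℝ) ^ 2 := by
        gcongr
        exact Stirling.le_factorial_stirling m

theorem choose_div_factorial_le {n m : ℕ} (hm₀ : m ≠ 0)
    (hm : Real.exp 1 * Real.sqrt n ≤ m) :
    (n.choose m : ℝ) / m.factorial ≤ 1 / (2 * Real.pi * m) := by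
  calc (n.choose m : ℝ) / m.factorial
      ≤ (n ^ m / m.factorial) / m.factorial := by
        gcongr
        exact Nat.choose_le_pow_div m n
    _ = n ^ m / (m.factorial : ℝ) ^ 2 := by rw [div_div, sq]
    _ ≤ 1 / (2 * Real.pi * m) := by
        rw [div_le_div_iff₀ (by positivity) (by positivity), one_mul, mul_comm]
        exact two_pi_mul_mul_pow_le_factorial_sq n.cast_nonneg hm

theorem tendsto_atTop_of_exp_one_mul_sqrt_le {j : ℕ → ℕ}
    (hj : ∀ᶠ n : ℕ in atTop, Real.exp 1 * Real.sqrt n ≤ j n) : Tendsto j atTop atTop := by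
  have hsqrt : Tendsto (fun n : ℕ => Real.exp 1 * Real.sqrt n) atTop atTop :=
    (Real.tendsto_sqrt_atTop.comp tendsto_natCast_atTop_atTop).const_mul_atTop (Real.exp_pos 1)
  exact tendsto_natCast_atTop_iff.1 (tendsto_atTop_mono' atTop hj hsqrt)

end Asymptotics

theorem stmt6_general (j : ℕ → ℕ) (hj : ∀ᶠ n : ℕ in atTop, Real.exp 1 * Real.sqrt n ≤ j n)
    (τ : ∀ n, Equiv.Perm (Fin (j n))) :
    Tendsto (fun n =>
        dTVFamUnif (I := {α : Finset (Fin n) // α.card = j n})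
          (fun σ α => OccursOn (τ n) σ α.1)
          (fun α => unifProb {σ | OccursOn (τ n) σ α.1}))
      atTop (nhds 0) := by
  have hj_top : Tendsto j atTop atTop := tendsto_atTop_of_exp_one_mul_sqrt_le hj
  have hbound : Tendsto (fun n => 1 / (2 * Real.pi * j n)) atTop (nhds 0) :=
    ((tendsto_natCast_atTop_atTop.comp hj_top).const_mul_atTop Real.two_pi_pos).const_div_atTop 1
  refine squeeze_zero' (.of_forall fun n => dTVFamUnif_nonneg _ _) ?_ hbound
  filter_upwards [hj, hj_top.eventually_ne_atTop 0] with n hjn hjn₀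
  exact (dTVFamUnif_le_sum_unifProb _).trans <|
    (sum_unifProb_occursOn (τ n)).trans_le (choose_div_factorial_le hjn₀ hjn)

/-- Corollary: for patterns of length `j(n) ≥ (e·e^{1/e} + η)·√n`, the joint law of the
pattern-occurrence indicators of a uniformly random permutation converges in total
variation to a family of independent Bernoulli random variables with the same marginals. -/
theorem stmt6 (eta : ℝ) (heta : 0 ≤ eta) (j : ℕ → ℕ) (hmono : Monotone j)
    (hj : ∀ n : ℕ, (Real.exp 1 * Real.exp (1 / Real.exp 1) + eta) * Real.sqrt n ≤ (j n : ℝ))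
    (τ : ∀ n, Equiv.Perm (Fin (j n))) :
    Filter.Tendsto (fun n =>
        dTVFamUnif (I := {α : Finset (Fin n) // α.card = j n})
          (fun σ α => OccursOn (τ n) σ α.1)
          (fun α => unifProb {σ | OccursOn (τ n) σ α.1}))
      Filter.atTop (nhds 0) := by
  have hconst : Real.exp 1 ≤ Real.exp 1 * Real.exp (1 / Real.exp 1) + eta :=
    le_add_of_le_of_nonneg
      (le_mul_of_one_le_right (Real.exp_pos 1).le (Real.one_le_exp (by positivity))) heta
  exact stmt6_general j (.of_forall fun n => le_trans (by gcongr) (hj n)) τ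

end
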